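/- Let λ be an even partition of length r and let n ∈ N_λ with n ≥ |λ| + λ_1. Then the exceptional Hermite polynomial P_n has exactly n − |λ| real zeros, all of which are simple, and exactly |λ| non-real zeros (counted with multiplicity). -/

import Mathlib

open Polynomial

/-- The physicists' Hermite polynomials: `H 0 = 1`, `H (n+1) = 2X * H n - (H n)'`. -/
noncomputable def physHermite : ℕ → Polynomial ℝ
  | 0 => 1
  | n + 1 => 2 * X * physHermite n - derivative (physHermite n)

/-- Wronskian determinant of a finite family of polynomials. -/
noncomputable def Wron {m : ℕ} (f : Fin m → Polynomial ℝ) : Polynomial ℝ :=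
  Matrix.det (Matrix.of fun i j : Fin m => (fun p => derivative p)^[(i : ℕ)] (f j))

/-- `lam : Fin r → ℕ` is a partition: weakly decreasing with positive parts. -/
def IsPartition (r : ℕ) (lam : Fin r → ℕ) : Prop :=
  (∀ i j : Fin r, i ≤ j → lam j ≤ lam i) ∧ ∀ i, 1 ≤ lam i

/-- An even (double) partition: `r` even and `λ_{2k-1} = λ_{2k}`. -/
def IsEvenPartition (r : ℕ) (lam : Fin r → ℕ) : Prop :=
  IsPartition r lam ∧ Even r ∧
    ∀ k : ℕ, ∀ h : 2 * k + 1 < r, lam ⟨2 * k, by omega⟩ = lam ⟨2 * k + 1, h⟩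

/-- The generalized Hermite polynomial `H_λ = Wr[H_{λ_r}, H_{λ_{r-1}+1}, …, H_{λ_1+r-1}]`. -/
noncomputable def genHermite (r : ℕ) (lam : Fin r → ℕ) : Polynomial ℝ :=
  Wron fun j : Fin r => physHermite (lam (Fin.rev j) + j)

/-- The exceptional Hermite polynomial
`P_n = Wr[H_{λ_r}, H_{λ_{r-1}+1}, …, H_{λ_1+r-1}, H_{n-|λ|+r}]`. -/
noncomputable def XHermite (r : ℕ) (lam : Fin r → ℕ) (n : ℕ) : Polynomial ℝ :=
  Wron fun j : Fin (r + 1) =>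
    if h : (j : ℕ) < r then physHermite (lam (Fin.rev ⟨(j : ℕ), h⟩) + j)
    else physHermite (n + r - ∑ i, lam i)

/-- The degree sequence `N_λ`: `n ≥ |λ| - r` and `n ≠ |λ| + λ_j - j` for `j = 1, …, r`. -/
def XDegSeq (r : ℕ) (lam : Fin r → ℕ) (n : ℕ) : Prop :=
  (∑ i, lam i) ≤ n + r ∧ ∀ i : Fin r, n ≠ (∑ i, lam i) + lam i - ((i : ℕ) + 1)

/-!
Write `W[κ]` for the Wronskian of the Hermite polynomials with degrees `κ`. For any further degrees
`g` and `b`, the polynomials `τ = W[κ]`, `a = W[κ, g]`, `s = W[κ, b]`, `ρ = W[κ, g, b]` satisfy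
`τ ρ = Wr[a, s]` (Jacobi's determinant identity) and, by the Hermite equation in Hirota's bilinear
form, `Wr[τ, ρ] = 2 x τ ρ + 2 (g - b) a s`. In terms of quotients,
`(s / a)' = τ ρ / a²` and `(exp (-x²) ρ / τ)' = 2 (g - b) exp (-x²) a s / τ²`.

Now `P_n = W[κ, m]` with `m = n + r - |λ|`, where the degrees `κ` of `H_λ` all lie below `m`, and
the evenness of `λ` says that the missing degrees satisfy the Krein–Adler condition. Filling the
least gap `g` of `κ` preserves that condition, and after `m - r` fillings `κ` is a permutation of
`0, …, m - 1`, so that its Wronskian is a nonzero constant. Going back, none of these `W[κ]` has a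
real zero: if `g < b` are the two least gaps and `a`, `ρ` do not vanish, then
`exp (x²) τ s / (ρ a)` is strictly increasing, which is incompatible with a zero of the even
polynomial `τ`. Taking `b = m` instead, Rolle's theorem for `s / a` and, with vanishing limits at
`±∞`, for `exp (-x²) ρ / τ` shows that `s` has exactly one more real zero than `ρ`, so `W[κ, m]`
has one real zero for each of the `m - r` gaps. As `P_n` has degree `n`, the other `|λ|` zeros are
not real.
-/

local infixl:67 " ▹ " => Fin.snoc (α := fun _ => _)

theorem append_pair {α : Type*} {m : ℕ} (u : Fin m → α) (x y : α) :
    Fin.append u ![x, y] = u ▹ x ▹ y := by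
  have hpair : ![x, y] = ![x] ▹ y := by
    ext i
    fin_cases i <;> rfl
  rw [hpair, Fin.append_snoc, Fin.append_right_eq_snoc]
  rfl

section Determinants

variable {R : Type*} [CommRing R]

theorem derivative_det {n : Type*} [Fintype n] [DecidableEq n] (M : Matrix n n R[X]) :
    derivative M.det = ∑ i, (M.updateRow i fun c => derivative (M i c)).det := by
  simp only [Matrix.det_apply, derivative_sum]
  rw [Finset.sum_comm]
  refine Finset.sum_congr rfl fun σ _ => ?_
  rw [Units.smul_def, derivative_smul, derivative_prod_finset, ← Finset.smul_sum,
    ← Equiv.sum_comp σ fun i => ∏ c, M.updateRow i (fun c => derivative (M i c)) (σ c) c]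
  refine congrArg _ (Finset.sum_congr rfl fun i _ => ?_)
  rw [← Finset.mul_prod_erase Finset.univ _ (Finset.mem_univ i), mul_comm, Matrix.updateRow_self]
  refine congrArg _ (Finset.prod_congr rfl fun c hc => ?_)
  rw [Matrix.updateRow_ne (σ.injective.ne (Finset.ne_of_mem_erase hc))]

theorem det_fromBlocks_mul_det_pow {m n : Type*} [Fintype m] [DecidableEq m] [Fintype n]
    [DecidableEq n] (A : Matrix m m R) (B : Matrix m n R) (C : Matrix n m R) (D : Matrix n n R) :
    (Matrix.fromBlocks A B C D).det * A.det ^ Fintype.card n =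
      A.det * (A.det • D - C * A.adjugate * B).det := by
  have hmul : Matrix.fromBlocks A B C D * Matrix.fromBlocks 1 (-(A.adjugate * B)) 0 (A.det • 1) =
      Matrix.fromBlocks A 0 C (A.det • D - C * A.adjugate * B) := by
    rw [Matrix.fromBlocks_multiply]
    congr 1 <;> simp [← Matrix.mul_assoc, Matrix.mul_adjugate, sub_eq_neg_add]
  simpa [Matrix.det_mul] using congrArg Matrix.det hmul

section Minors

variable {α β : Type*} {m : ℕ} (M : Matrix α β R) (d : Fin m → α) (f : Fin m → β)

/-- The numerator of the Schur complement of the minor of `M` with rows `d` and columns `f`,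
extended to all rows and columns of `M`. -/
def schurNumerator : Matrix α β R :=
  (M.submatrix d f).det • M -
    M.submatrix id f * (M.submatrix d f).adjugate * M.submatrix d id

theorem det_submatrix_append_mul_pow {n : ℕ} (p : Fin n → α) (g : Fin n → β) :
    (M.submatrix (Fin.append d p) (Fin.append f g)).det * (M.submatrix d f).det ^ n =
      (M.submatrix d f).det * ((schurNumerator M d f).submatrix p g).det := by
  have hblocks : (M.submatrix (Fin.append d p) (Fin.append f g)).submatrix finSumFinEquiv
      finSumFinEquiv = Matrix.fromBlocks (M.submatrix d f) (M.submatrix d g) (M.submatrix p f)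
        (M.submatrix p g) := by
    ext (i | i) (c | c) <;> simp
  rw [← Matrix.det_submatrix_equiv_self finSumFinEquiv, hblocks]
  have hpow := det_fromBlocks_mul_det_pow (M.submatrix d f) (M.submatrix d g) (M.submatrix p f)
    (M.submatrix p g)
  rwa [Fintype.card_fin] at hpow

variable [IsDomain R]

theorem det_submatrix_snoc (h : (M.submatrix d f).det ≠ 0) (p : α) (g : β) :
    (M.submatrix (d ▹ p) (f ▹ g)).det = schurNumerator M d f p g := by
  have hpow := det_submatrix_append_mul_pow M d f ![p] ![g]
  rw [pow_one, mul_comm, Fin.append_right_eq_snoc, Fin.append_right_eq_snoc,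
    Matrix.det_fin_one] at hpow
  exact mul_left_cancel₀ h hpow

theorem desnanot_jacobi (h : (M.submatrix d f).det ≠ 0)
    (p q : α) (g k : β) :
    (M.submatrix d f).det * (M.submatrix (d ▹ p ▹ q) (f ▹ g ▹ k)).det =
      (M.submatrix (d ▹ p) (f ▹ g)).det * (M.submatrix (d ▹ q) (f ▹ k)).det -
        (M.submatrix (d ▹ p) (f ▹ k)).det * (M.submatrix (d ▹ q) (f ▹ g)).det := by
  have hpow := det_submatrix_append_mul_pow M d f ![p, q] ![g, k]
  rw [append_pair, append_pair, Matrix.det_fin_two, pow_two] at hpow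
  simp only [det_submatrix_snoc M d f h]
  apply mul_left_cancel₀ h
  simpa [mul_comm, mul_assoc, mul_left_comm] using hpow

end Minors

end Determinants

section Wronskians

/-- The matrix of iterated derivatives of all polynomials; Wronskians are minors of it. -/
noncomputable def derivMatrix : Matrix ℕ ℝ[X] ℝ[X] :=
  Matrix.of fun i p => derivative^[i] p

theorem wron_eq_det_submatrix {m : ℕ} (f : Fin m → ℝ[X]) :
    Wron f = (derivMatrix.submatrix Fin.val f).det :=
  rfl

theorem fin_val_eq_snoc (m : ℕ) : (Fin.val : Fin (m + 1) → ℕ) = Fin.val ▹ m := by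
  ext i
  cases i using Fin.lastCases <;> simp

theorem derivative_wron {m : ℕ} (f : Fin (m + 1) → ℝ[X]) :
    derivative (Wron f) = (derivMatrix.submatrix (Fin.val ▹ (m + 1)) f).det := by
  have hrow (i : Fin (m + 1)) (c : Fin (m + 1)) :
      derivative (derivMatrix i (f c)) = derivMatrix (i + 1) (f c) :=
    (Function.iterate_succ_apply' derivative i (f c)).symm
  rw [wron_eq_det_submatrix, derivative_det, Fin.sum_univ_castSucc, Finset.sum_eq_zero, zero_add]
  · congr 1
    refine Matrix.ext fun i c => ?_
    cases i using Fin.lastCases with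
    | last => simpa using hrow (Fin.last m) c
    | cast i => simp
  · intro i _
    refine Matrix.det_zero_of_row_eq (Fin.castSucc_lt_succ (i := i)).ne (funext fun c => ?_)
    rw [Matrix.updateRow_self, Matrix.updateRow_ne Fin.castSucc_lt_succ.ne']
    simpa using hrow i.castSucc c

variable {m : ℕ} {f : Fin m → ℝ[X]}

theorem wron_mul_wron_snoc_snoc (hf : Wron f ≠ 0) (g h : ℝ[X]) :
    Wron f * Wron (f ▹ g ▹ h) = wronskian (Wron (f ▹ g)) (Wron (f ▹ h)) := by
  have hval : (Fin.val : Fin (m + 2) → ℕ) = Fin.val ▹ m ▹ (m + 1) := by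
    rw [fin_val_eq_snoc (m + 1), fin_val_eq_snoc m]
  rw [wronskian, derivative_wron, derivative_wron, wron_eq_det_submatrix (f ▹ g ▹ h), hval,
    wron_eq_det_submatrix (f ▹ g), wron_eq_det_submatrix (f ▹ h), fin_val_eq_snoc m]
  rw [wron_eq_det_submatrix] at hf ⊢
  rw [desnanot_jacobi derivMatrix Fin.val f hf]
  ring

theorem coeff_mul_derivative (p q : ℝ[X]) :
    (p * derivative q).coeff (p.natDegree + q.natDegree - 1) =
      p.leadingCoeff * q.leadingCoeff * q.natDegree := by
  rcases Nat.eq_zero_or_pos q.natDegree with hq | hq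
  · simp [hq, derivative_of_natDegree_zero hq]
  · rw [Nat.add_sub_assoc hq,
      coeff_mul_add_eq_of_natDegree_le le_rfl (natDegree_derivative_le q), coeff_derivative,
      ← Nat.cast_add_one, Nat.sub_add_cancel hq, coeff_natDegree, coeff_natDegree, mul_assoc]

theorem wronskian_ne_zero_and_natDegree {p q : ℝ[X]} (hp : p ≠ 0) (hq : q ≠ 0)
    (hne : p.natDegree ≠ q.natDegree) :
    wronskian p q ≠ 0 ∧ (wronskian p q).natDegree + 1 = p.natDegree + q.natDegree := by
  have hcoeff : (wronskian p q).coeff (p.natDegree + q.natDegree - 1) =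
      p.leadingCoeff * q.leadingCoeff * (q.natDegree - p.natDegree) := by
    have hqp := coeff_mul_derivative q p
    rw [mul_comm q, add_comm q.natDegree] at hqp
    rw [wronskian, coeff_sub, coeff_mul_derivative, hqp]
    ring
  have hcoeff_ne : (wronskian p q).coeff (p.natDegree + q.natDegree - 1) ≠ 0 := by
    rw [hcoeff]
    exact mul_ne_zero (mul_ne_zero (leadingCoeff_ne_zero.mpr hp) (leadingCoeff_ne_zero.mpr hq))
      (sub_ne_zero.mpr (Nat.cast_injective.ne hne.symm))
  have hne_zero : wronskian p q ≠ 0 := fun h => hcoeff_ne (by rw [h, coeff_zero])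
  have hlt := natDegree_wronskian_lt_add hne_zero
  have hle := le_natDegree_of_ne_zero hcoeff_ne
  exact ⟨hne_zero, by lia⟩

theorem wron_ne_zero_and_natDegree : ∀ {m : ℕ} (f : Fin m → ℝ[X]), (∀ i, f i ≠ 0) →
    Function.Injective (natDegree ∘ f) →
    Wron f ≠ 0 ∧ (Wron f).natDegree + ∑ i : Fin m, (i : ℕ) = ∑ i, (f i).natDegree
  | 0, _, _, _ => by simp [Wron]
  | 1, f, hf, _ => by simpa [Wron] using hf 0
  | m + 2, f, hf, hinj => by
    cases f using Fin.snocCases with | snoc f h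
    cases f using Fin.snocCases with | snoc f g
    simp only [Fin.forall_fin_succ', Fin.snoc_castSucc, Fin.snoc_last] at hf
    obtain ⟨⟨hf, hg⟩, hh⟩ := hf
    simp only [Fin.comp_snoc, Fin.snoc_injective_iff, Fin.range_snoc, Set.mem_insert_iff,
      not_or] at hinj
    obtain ⟨⟨hinj, hg_notMem⟩, hgh, hh_notMem⟩ := hinj
    have ih_snoc (k : ℝ[X]) (hk : k ≠ 0) (hk_notMem : k.natDegree ∉ Set.range (natDegree ∘ f)) :
        Wron (f ▹ k) ≠ 0 ∧ (Wron (f ▹ k)).natDegree + ∑ i : Fin (m + 1), (i : ℕ) =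
          ∑ i, (f i).natDegree + k.natDegree := by
      simpa [Fin.sum_univ_castSucc] using wron_ne_zero_and_natDegree (f ▹ k)
        (Fin.forall_fin_succ'.mpr ⟨by simpa using hf, by simpa using hk⟩)
        (by simpa only [Fin.comp_snoc] using Fin.snoc_injective_of_injective hinj hk_notMem)
    obtain ⟨hWf, hdeg_f⟩ := wron_ne_zero_and_natDegree f hf hinj
    obtain ⟨hWg, hdeg_g⟩ := ih_snoc g hg hg_notMem
    obtain ⟨hWh, hdeg_h⟩ := ih_snoc h hh hh_notMem
    have hwronskian := wronskian_ne_zero_and_natDegree hWg hWh (by lia)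
    rw [← wron_mul_wron_snoc_snoc hWf] at hwronskian
    obtain ⟨hmul, hdeg_mul⟩ := hwronskian
    have hW := right_ne_zero_of_mul hmul
    rw [natDegree_mul hWf hW] at hdeg_mul
    refine ⟨hW, ?_⟩
    simp only [Fin.sum_univ_castSucc, Fin.snoc_castSucc, Fin.snoc_last, Fin.val_castSucc,
      Fin.val_last] at hdeg_f hdeg_g hdeg_h ⊢
    lia

theorem iterate_derivative_comp_neg_X (p : ℝ[X]) (k : ℕ) :
    derivative^[k] (p.comp (-X)) = (-1) ^ k * (derivative^[k] p).comp (-X) := by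
  induction k generalizing p with
  | zero => simp
  | succ k ih => simp [ih (derivative p), derivative_comp, pow_succ]

theorem wron_comp_neg_X {m : ℕ} (f : Fin m → ℝ[X]) :
    Wron (fun i => (f i).comp (-X)) = (-1) ^ (∑ i : Fin m, (i : ℕ)) * (Wron f).comp (-X) := by
  rw [← Finset.prod_pow_eq_pow_sum, ← coe_compRingHom_apply, Wron, Wron,
    RingHom.map_det, ← Matrix.det_mul_column]
  congr 1
  ext1 i c
  exact iterate_derivative_comp_neg_X (f c) i

theorem wron_C_mul {m : ℕ} (c : Fin m → ℝ) (f : Fin m → ℝ[X]) :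
    Wron (fun i => C (c i) * f i) = C (∏ i, c i) * Wron f := by
  rw [map_prod, Wron, Wron, ← Matrix.det_mul_row]
  congr 1
  ext1 i k
  exact iterate_derivative_C_mul (c k) (f k) i

end Wronskians

section Hermite

theorem physHermite_succ (n : ℕ) :
    physHermite (n + 1) = 2 * X * physHermite n - derivative (physHermite n) := by
  rw [physHermite]

theorem derivative_physHermite_succ (n : ℕ) :
    derivative (physHermite (n + 1)) = C (2 * (n + 1 : ℝ)) * physHermite n := by
  induction n with
  | zero =>
    simp only [physHermite, derivative_one, sub_zero, mul_one, derivative_mul, derivative_ofNat,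
      derivative_X, zero_mul, zero_add, Nat.cast_zero, map_ofNat]
  | succ n ih =>
    rw [physHermite_succ (n + 1), ih, derivative_sub, derivative_mul, derivative_C_mul, ih,
      physHermite_succ n]
    simp only [derivative_mul, derivative_ofNat, derivative_X, map_add, map_mul, map_one,
      map_ofNat, map_natCast, Nat.cast_add, Nat.cast_one]
    ring

theorem physHermite_ode (n : ℕ) :
    derivative (derivative (physHermite n)) =
      2 * X * derivative (physHermite n) - C (2 * (n : ℝ)) * physHermite n := by
  have hderiv := derivative_physHermite_succ n
  rw [physHermite_succ, derivative_sub, derivative_mul, derivative_mul, derivative_ofNat,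
    derivative_X] at hderiv
  simp only [map_add, map_mul, map_one, map_ofNat] at hderiv ⊢
  linear_combination -hderiv

theorem physHermite_ne_zero (n : ℕ) : physHermite n ≠ 0 := by
  induction n with
  | zero => simp [physHermite]
  | succ n ih =>
    intro h
    have hderiv := derivative_physHermite_succ n
    rw [h, derivative_zero] at hderiv
    exact mul_ne_zero (C_ne_zero.mpr (by positivity)) ih hderiv.symm

theorem natDegree_physHermite (n : ℕ) : (physHermite n).natDegree = n := by
  induction n with
  | zero => simp [physHermite]
  | succ n ih =>
    have hderiv := derivative_physHermite_succ n
    have hc : (2 * (n + 1 : ℝ)) ≠ 0 := by positivity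
    have hne : (physHermite (n + 1)).natDegree ≠ 0 := by
      rw [Ne, ← derivative_eq_zero, hderiv]
      exact mul_ne_zero (C_ne_zero.mpr hc) (physHermite_ne_zero n)
    have hdeg := congrArg natDegree hderiv
    rw [natDegree_C_mul hc, ih, natDegree_derivative] at hdeg
    lia

theorem physHermite_comp_neg_X (n : ℕ) :
    (physHermite n).comp (-X) = C ((-1) ^ n) * physHermite n := by
  induction n with
  | zero => simp [physHermite]
  | succ n ih =>
    have hderiv := congrArg derivative ih
    rw [derivative_comp, derivative_C_mul, derivative_neg, derivative_X] at hderiv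
    rw [physHermite_succ, sub_comp, mul_comp, mul_comp, ih, X_comp, ofNat_comp, pow_succ, C_mul,
      C_neg, C_1]
    linear_combination hderiv

/-- The Wronskian `Wr[H_{κ_0}, …, H_{κ_{m-1}}]`. -/
noncomputable def hermiteWron {m : ℕ} (κ : Fin m → ℕ) : ℝ[X] :=
  Wron (physHermite ∘ κ)

variable {m : ℕ} {κ : Fin m → ℕ}

theorem hermiteWron_ne_zero_and_natDegree (hκ : Function.Injective κ) :
    hermiteWron κ ≠ 0 ∧ (hermiteWron κ).natDegree + ∑ i : Fin m, (i : ℕ) = ∑ i, κ i := by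
  simpa [hermiteWron, natDegree_physHermite] using wron_ne_zero_and_natDegree (physHermite ∘ κ)
    (fun i => physHermite_ne_zero (κ i))
    (by simpa [← Function.comp_assoc, Function.comp_def, natDegree_physHermite] using hκ)

theorem hermiteWron_comp_neg_X (κ : Fin m → ℕ) :
    (hermiteWron κ).comp (-X) = (-1) ^ (∑ i : Fin m, ((i : ℕ) + κ i)) * hermiteWron κ := by
  have hreflect := wron_comp_neg_X (physHermite ∘ κ)
  simp only [Function.comp_apply, physHermite_comp_neg_X, wron_C_mul,
    Finset.prod_pow_eq_pow_sum] at hreflect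
  simp only [map_pow, map_neg, map_one] at hreflect
  have hsq : ((-1 : ℝ[X]) ^ ∑ i : Fin m, (i : ℕ)) ^ 2 = 1 := by
    rw [← pow_mul, mul_comm, pow_mul, neg_one_sq, one_pow]
  rw [Finset.sum_add_distrib, pow_add, hermiteWron]
  rw [← Function.comp_def physHermite] at hreflect
  linear_combination
    -(-1) ^ (∑ i : Fin m, (i : ℕ)) * hreflect - (Wron (physHermite ∘ κ)).comp (-X) * hsq

theorem physHermite_comp_snoc (κ : Fin m → ℕ) (b : ℕ) :
    physHermite ∘ (κ ▹ b) = (physHermite ∘ κ) ▹ physHermite b :=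
  Fin.comp_snoc physHermite κ b

theorem hermiteWron_mul_hermiteWron_snoc_snoc (hκ : Function.Injective κ) (g b : ℕ) :
    hermiteWron κ * hermiteWron (κ ▹ g ▹ b) =
      wronskian (hermiteWron (κ ▹ g)) (hermiteWron (κ ▹ b)) := by
  simpa only [hermiteWron, physHermite_comp_snoc] using
    wron_mul_wron_snoc_snoc (hermiteWron_ne_zero_and_natDegree hκ).1 (physHermite g) (physHermite b)

end Hermite

section Hirota

/-- Hirota's bilinear equation `(D² - 2xD + 2c) q · p = 0`. It says that `exp (-x² / 2) q / p` is
an eigenfunction of the Schrödinger operator with potential `x² - 2 (log p)''`. -/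
def IsHirotaPair (c : ℝ) (p q : ℝ[X]) : Prop :=
  p * derivative (derivative q) - 2 * derivative p * derivative q + derivative (derivative p) * q -
    2 * X * wronskian p q + C (2 * c) * (p * q) = 0

/-- Four polynomials related like the Hermite Wronskians `τ = W[κ]`, `a = W[κ, α]`, `s = W[κ, β]`
and `ρ = W[κ, α, β]`, for which `c = 2 (α - β)`. The Darboux transformation with seed `a / τ` sends
`s / τ` to `ρ / a`, and the one with seed `exp (x²) τ / a` sends `ρ / a` back to `c s / τ`. -/
structure IsDarbouxSquare (c : ℝ) (τ a s ρ : ℝ[X]) : Prop where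
  mul_eq_wronskian : τ * ρ = wronskian a s
  wronskian_eq : wronskian τ ρ = 2 * X * (τ * ρ) + C c * (a * s)

namespace IsHirotaPair

variable {α β : ℝ} {τ a s ρ : ℝ[X]}

theorem isDarbouxSquare (ha : IsHirotaPair α τ a) (hs : IsHirotaPair β τ s) (hτ : τ ≠ 0)
    (hρ : τ * ρ = wronskian a s) : IsDarbouxSquare (2 * (α - β)) τ a s ρ := by
  refine ⟨hρ, mul_left_cancel₀ hτ ?_⟩
  have hρ' := congrArg derivative hρ
  simp only [IsHirotaPair, wronskian, derivative_mul, derivative_sub, C_mul, C_sub, C_ofNat]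
    at ha hs hρ hρ' ⊢
  linear_combination a * hs - s * ha + τ * hρ' - (2 * derivative τ + 2 * X * τ) * hρ

theorem of_mul_eq_wronskian (ha : IsHirotaPair α τ a) (hs : IsHirotaPair β τ s) (hτ : τ ≠ 0)
    (hρ : τ * ρ = wronskian a s) : IsHirotaPair (β - 1) a ρ := by
  have hbilin := (ha.isDarbouxSquare hs hτ hρ).wronskian_eq
  have hbilin' := congrArg derivative hbilin
  apply mul_left_cancel₀ hτ
  simp only [IsHirotaPair, wronskian, derivative_mul, derivative_sub, derivative_add, derivative_C,
    derivative_X, derivative_ofNat, C_mul, C_sub, C_ofNat, C_1] at ha hρ hbilin hbilin' ⊢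
  linear_combination ρ * ha + a * hbilin' - 2 * derivative a * hbilin +
    2 * (C α - C β) * a * (-hρ)

end IsHirotaPair

variable {m : ℕ} {κ : Fin m → ℕ}

theorem isHirotaPair_hermiteWron (hκ : Function.Injective κ) (b : ℕ) :
    IsHirotaPair (b - m) (hermiteWron κ) (hermiteWron (κ ▹ b)) := by
  induction κ using Fin.snocInduction generalizing b with
  | elim0 =>
    have hsnoc : (Fin.elim0 ▹ b : Fin 1 → ℕ) 0 = b := rfl
    simp [IsHirotaPair, hermiteWron, Wron, wronskian, physHermite_ode, hsnoc]
  | snoc κ g ih =>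
    have hinj := (Fin.snoc_injective_iff.mp hκ).1
    have hpair := (ih hinj g).of_mul_eq_wronskian (ih hinj b)
      (hermiteWron_ne_zero_and_natDegree hinj).1 (hermiteWron_mul_hermiteWron_snoc_snoc hinj g b)
    rwa [sub_sub, ← Nat.cast_succ] at hpair

theorem isDarbouxSquare_hermiteWron (hκ : Function.Injective κ) (g b : ℕ) :
    IsDarbouxSquare (2 * (g - b)) (hermiteWron κ) (hermiteWron (κ ▹ g)) (hermiteWron (κ ▹ b))
      (hermiteWron (κ ▹ g ▹ b)) := by
  simpa only [sub_sub_sub_cancel_right] using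
    (isHirotaPair_hermiteWron hκ g).isDarbouxSquare (isHirotaPair_hermiteWron hκ b)
      (hermiteWron_ne_zero_and_natDegree hκ).1 (hermiteWron_mul_hermiteWron_snoc_snoc hκ g b)

end Hirota

section RealZeros

open Filter Asymptotics Set Real
open scoped Topology

theorem isBigO_one_inv_eval_atTop {q : ℝ[X]} (hq : q ≠ 0) :
    (fun x => (q.eval x)⁻¹) =O[atTop] fun _ => (1 : ℝ) := by
  have hone : (fun x => (1 : ℝ[X]).eval x) =O[atTop] fun x => q.eval x :=
    isBigO_atTop_of_degree_le 1 q (by rw [degree_one]; exact zero_le_degree_iff.mpr hq)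
  simpa using hone.inv_rev (by simp)

theorem tendsto_exp_neg_sq_mul_eval_div_eval_atTop (p : ℝ[X]) {q : ℝ[X]} (hq : q ≠ 0) :
    Tendsto (fun x => exp (-x ^ 2) * (p.eval x / q.eval x)) atTop (𝓝 0) := by
  have hexp : (fun x => exp (-x ^ 2)) =O[atTop] fun x => (exp x)⁻¹ := by
    refine IsBigO.of_bound' ?_
    filter_upwards [eventually_ge_atTop 1] with x hx
    rw [← exp_neg, Real.norm_of_nonneg (exp_nonneg _),
      Real.norm_of_nonneg (exp_nonneg _), exp_le_exp]
    nlinarith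
  have hdiv : (fun x => p.eval x / q.eval x) =O[atTop] fun x => p.eval x := by
    simpa [div_eq_mul_inv] using (isBigO_refl _ _).mul (isBigO_one_inv_eval_atTop hq)
  refine (hexp.mul hdiv).trans_tendsto ?_
  simpa only [div_eq_inv_mul] using p.tendsto_div_exp_atTop

theorem tendsto_exp_neg_sq_mul_eval_div_eval_cocompact (p : ℝ[X]) {q : ℝ[X]} (hq : q ≠ 0) :
    Tendsto (fun x => exp (-x ^ 2) * (p.eval x / q.eval x)) (cocompact ℝ) (𝓝 0) := by
  rw [cocompact_eq_atBot_atTop, tendsto_sup]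
  refine ⟨?_, tendsto_exp_neg_sq_mul_eval_div_eval_atTop p hq⟩
  have hcomp := (tendsto_exp_neg_sq_mul_eval_div_eval_atTop (p.comp (-X))
    (comp_neg_X_eq_zero_iff.not.mpr hq)).comp tendsto_neg_atBot_atTop
  simpa [Function.comp_def] using hcomp

theorem card_lt_card_of_tendsto_nhdsGT_of_tendsto_nhdsLT {f f' : ℝ → ℝ} {a b l : ℝ}
    (hab : a < b) (hf : ∀ x ∈ Ioo a b, HasDerivAt f (f' x) x) (ha : Tendsto f (𝓝[>] a) (𝓝 l))
    (hb : Tendsto f (𝓝[<] b) (𝓝 l)) {Z T : Finset ℝ} (hZ : ∀ z ∈ Z, z ∈ Ioo a b ∧ f z = l)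
    (hT : ∀ t ∈ Ioo a b, f' t = 0 → t ∈ T) : Z.card < T.card := by
  have hends : ∀ x ∈ insert a (insert b Z), x ∈ Icc a b ∧
      (x ≠ b → Tendsto f (𝓝[>] x) (𝓝 l)) ∧ (x ≠ a → Tendsto f (𝓝[<] x) (𝓝 l)) := by
    simp only [Finset.mem_insert]
    rintro x (rfl | rfl | hx)
    · exact ⟨left_mem_Icc.mpr hab.le, fun _ => ha, fun h => absurd rfl h⟩
    · exact ⟨right_mem_Icc.mpr hab.le, fun h => absurd rfl h, fun _ => hb⟩
    · obtain ⟨hx_mem, hfx⟩ := hZ x hx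
      have hlim : Tendsto f (𝓝 x) (𝓝 l) := hfx ▸ (hf x hx_mem).continuousAt.tendsto
      exact ⟨Ioo_subset_Icc_self hx_mem, fun _ => hlim.mono_left nhdsWithin_le_nhds,
        fun _ => hlim.mono_left nhdsWithin_le_nhds⟩
  have hinterleaved : (insert a (insert b Z)).card ≤ T.card + 1 := by
    refine Finset.card_le_of_interleaved fun x hx y hy hxy _ => ?_
    obtain ⟨⟨hax, -⟩, hx_lim, -⟩ := hends x hx
    obtain ⟨⟨-, hyb⟩, -, hy_lim⟩ := hends y hy
    have hsub := Ioo_subset_Ioo hax hyb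
    obtain ⟨t, ht, hft⟩ := exists_hasDerivAt_eq_zero' hxy (hx_lim (hxy.trans_le hyb).ne)
      (hy_lim (hax.trans_lt hxy).ne') fun t ht => hf t (hsub ht)
    exact ⟨t, hT t (hsub ht) hft, ht⟩
  have hcard : (insert a (insert b Z)).card = Z.card + 2 := by
    rw [Finset.card_insert_of_notMem, Finset.card_insert_of_notMem]
    · exact fun h => (hZ b h).1.2.false
    · simpa [hab.ne] using fun h => (hZ a h).1.1.false
  lia

theorem card_lt_card_of_tendsto_cocompact {f f' : ℝ → ℝ} {l : ℝ}
    (hf : ∀ x, HasDerivAt f (f' x) x) (hlim : Tendsto f (cocompact ℝ) (𝓝 l)) {Z T : Finset ℝ}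
    (hZ : ∀ z ∈ Z, f z = l) (hT : ∀ t, f' t = 0 → t ∈ T) : Z.card < T.card := by
  rw [cocompact_eq_atBot_atTop, tendsto_sup] at hlim
  rw [← Finset.card_image_of_injective Z arctan_injective,
    ← Finset.card_image_of_injective T arctan_injective]
  refine card_lt_card_of_tendsto_nhdsGT_of_tendsto_nhdsLT (by linarith [pi_pos])
    (fun θ hθ => (hf (tan θ)).comp θ (hasDerivAt_tan_of_mem_Ioo hθ))
    (hlim.1.comp tendsto_tan_neg_pi_div_two) (hlim.2.comp tendsto_tan_pi_div_two) ?_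
    fun θ hθ hθ_zero => ?_
  · simpa [neg_pi_div_two_lt_arctan, arctan_lt_pi_div_two] using hZ
  · have hcos : 1 / cos θ ^ 2 ≠ 0 := by simpa using (cos_pos_of_mem_Ioo hθ).ne'
    exact Finset.mem_image.mpr
      ⟨tan θ, hT _ ((mul_eq_zero_iff_right hcos).mp hθ_zero), arctan_tan hθ.1 hθ.2⟩

theorem hasDerivAt_exp_mul_eval_div_eval (k : ℝ) (p : ℝ[X]) {q : ℝ[X]} {x : ℝ}
    (hq : q.eval x ≠ 0) :
    HasDerivAt (fun x => exp (k * x ^ 2) * (p.eval x / q.eval x))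
      (exp (k * x ^ 2) *
        ((wronskian q p + C (2 * k) * X * (q * p)).eval x / q.eval x ^ 2)) x := by
  have hexp : HasDerivAt (fun x : ℝ => exp (k * x ^ 2))
      (exp (k * x ^ 2) * (k * (2 * x))) x := by
    simpa using ((hasDerivAt_pow 2 x).const_mul k).exp
  refine (hexp.mul ((p.hasDerivAt x).div (q.hasDerivAt x) hq)).congr_deriv ?_
  simp only [wronskian, eval_add, eval_sub, eval_mul, eval_C, eval_X, Pi.div_apply]
  field_simp
  ring

theorem card_roots_le_card_roots_wronskian_add_one {p q : ℝ[X]} (hq : ∀ x, q.eval x ≠ 0)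
    (hw : wronskian q p ≠ 0) :
    p.roots.toFinset.card ≤ (wronskian q p).roots.toFinset.card + 1 := by
  have hderiv (x : ℝ) : HasDerivAt (fun x => p.eval x / q.eval x)
      ((wronskian q p).eval x / q.eval x ^ 2) x := by
    simpa using hasDerivAt_exp_mul_eval_div_eval 0 p (hq x)
  refine Finset.card_le_of_interleaved fun x hx y hy hxy _ => ?_
  rw [Multiset.mem_toFinset] at hx hy
  obtain ⟨z, hz, hz_zero⟩ := exists_hasDerivAt_eq_zero hxy
    (fun z _ => (hderiv z).continuousAt.continuousWithinAt)
    (by rw [isRoot_of_mem_roots hx, isRoot_of_mem_roots hy, zero_div, zero_div])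
    (fun z _ => hderiv z)
  refine ⟨z, ?_, hz⟩
  rw [Multiset.mem_toFinset, mem_roots hw]
  simpa [hq z] using hz_zero

theorem card_roots_lt_card_roots_wronskian_sub {p q : ℝ[X]} (hq : ∀ x, q.eval x ≠ 0)
    (hw : wronskian q p - 2 * X * (q * p) ≠ 0) :
    p.roots.toFinset.card < (wronskian q p - 2 * X * (q * p)).roots.toFinset.card := by
  have hderiv (x : ℝ) : HasDerivAt (fun x => exp (-x ^ 2) * (p.eval x / q.eval x))
      (exp (-x ^ 2) *
        ((wronskian q p - 2 * X * (q * p)).eval x / q.eval x ^ 2)) x := by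
    simpa [sub_eq_add_neg] using hasDerivAt_exp_mul_eval_div_eval (-1) p (hq x)
  refine card_lt_card_of_tendsto_cocompact hderiv
    (tendsto_exp_neg_sq_mul_eval_div_eval_cocompact p (fun h => hq 0 (by simp [h])))
    (fun z hz => ?_) fun t ht => ?_
  · rw [Multiset.mem_toFinset] at hz
    rw [isRoot_of_mem_roots hz, zero_div, mul_zero]
  · rw [Multiset.mem_toFinset, mem_roots hw]
    simpa [hq t, exp_ne_zero] using ht

theorem not_isRoot_of_derivative_mul_eq {p q u v w : ℝ[X]} {x : ℝ} (hp : p ≠ 0)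
    (hu : ¬u.IsRoot x) (hle : p.rootMultiplicity x ≤ q.rootMultiplicity x)
    (h : derivative p * u = p * v + q * w) : ¬p.IsRoot x := by
  intro hx
  have hdvd : (X - C x) ^ p.rootMultiplicity x ∣ derivative p * u := by
    rw [h]
    exact dvd_add (dvd_mul_of_dvd_left (pow_rootMultiplicity_dvd p x) v)
      (dvd_mul_of_dvd_left ((pow_dvd_pow _ hle).trans (pow_rootMultiplicity_dvd q x)) w)
  have hderiv : derivative p * u ≠ 0 := by
    refine mul_ne_zero (fun h0 => hp ?_) (fun h0 => hu (by simp [h0]))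
    rw [eq_C_of_derivative_eq_zero h0] at hx ⊢
    simpa using hx
  have hmult := (le_rootMultiplicity_iff hderiv).mpr hdvd
  rw [rootMultiplicity_mul hderiv, rootMultiplicity_eq_zero hu,
    derivative_rootMultiplicity_of_root hx] at hmult
  have := (rootMultiplicity_pos hp).mpr hx
  lia

end RealZeros

section DarbouxSquare

theorem roots_mul_of_forall_eval_ne_zero {p : ℝ[X]} (hp : ∀ x, p.eval x ≠ 0) (q : ℝ[X]) :
    (p * q).roots = q.roots := by
  have hp0 : p ≠ 0 := fun h => hp 0 (by simp [h])
  have hroots : p.roots = 0 :=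
    Multiset.eq_zero_of_forall_notMem fun x hx => hp x (isRoot_of_mem_roots hx)
  rcases eq_or_ne q 0 with rfl | hq
  · rw [mul_zero]
  · rw [roots_mul (mul_ne_zero hp0 hq), hroots, zero_add]

namespace IsDarbouxSquare

variable {c : ℝ} {τ a s ρ : ℝ[X]}

theorem not_isRoot_of_isRoot (h : IsDarbouxSquare c τ a s ρ) (hτ : τ ≠ 0) (hs : s ≠ 0) {x : ℝ}
    (ha : ¬a.IsRoot x) (hρ : ¬ρ.IsRoot x) (hx : τ.IsRoot x) : ¬s.IsRoot x := by
  intro hsx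
  have hjac := h.mul_eq_wronskian
  have hbilin := h.wronskian_eq
  rw [wronskian] at hjac hbilin
  rcases le_total (τ.rootMultiplicity x) (s.rootMultiplicity x) with hle | hle
  · refine not_isRoot_of_derivative_mul_eq hτ hρ hle (v := derivative ρ - 2 * X * ρ)
      (w := -(C c * a)) ?_ hx
    linear_combination -hbilin
  · refine not_isRoot_of_derivative_mul_eq hs ha hle (v := derivative a) (w := ρ) ?_ hsx
    linear_combination -hjac

theorem strictMono_exp_mul_eval_div_eval (h : IsDarbouxSquare c τ a s ρ) (hc : c < 0) (hτ : τ ≠ 0)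
    (hs : s ≠ 0) (ha : ∀ x, a.eval x ≠ 0) (hρ : ∀ x, ρ.eval x ≠ 0) :
    StrictMono fun x => Real.exp (x ^ 2) * ((τ * s).eval x / (ρ * a).eval x) := by
  have hwronskian : wronskian (ρ * a) (τ * s) + 2 * X * (ρ * a * (τ * s)) =
      (τ * ρ) ^ 2 - C c * (a * s) ^ 2 := by
    have hjac := h.mul_eq_wronskian
    have hbilin := h.wronskian_eq
    simp only [wronskian, derivative_mul] at hjac hbilin ⊢
    linear_combination -(a * s) * hbilin - ρ * τ * hjac
  have hden (x : ℝ) : (ρ * a).eval x ≠ 0 := by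
    rw [eval_mul]
    exact mul_ne_zero (hρ x) (ha x)
  have hderiv (x : ℝ) : HasDerivAt (fun x => Real.exp (x ^ 2) * ((τ * s).eval x / (ρ * a).eval x))
      (Real.exp (x ^ 2) * (((τ * ρ) ^ 2 - C c * (a * s) ^ 2).eval x / (ρ * a).eval x ^ 2)) x := by
    simpa [← hwronskian] using hasDerivAt_exp_mul_eval_div_eval 1 (τ * s) (hden x)
  refine strictMono_of_hasDerivAt_pos hderiv fun x => ?_
  have hnum : 0 < ((τ * ρ) ^ 2 - C c * (a * s) ^ 2).eval x := by
    simp only [eval_sub, eval_pow, eval_mul, eval_C]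
    by_cases hx : τ.IsRoot x
    · have has : a.eval x * s.eval x ≠ 0 :=
        mul_ne_zero (ha x) (h.not_isRoot_of_isRoot hτ hs (ha x) (hρ x) hx)
      nlinarith [sq_nonneg (τ.eval x * ρ.eval x), pow_two_pos_of_ne_zero has]
    · have hτρ : τ.eval x * ρ.eval x ≠ 0 := mul_ne_zero hx (hρ x)
      nlinarith [pow_two_pos_of_ne_zero hτρ, sq_nonneg (a.eval x * s.eval x)]
  exact mul_pos (Real.exp_pos _) (div_pos hnum (pow_two_pos_of_ne_zero (hden x)))

theorem eval_ne_zero_of_comp_neg_X_eq (h : IsDarbouxSquare c τ a s ρ) (hc : c < 0) (hτ : τ ≠ 0)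
    (hs : s ≠ 0) (ha : ∀ x, a.eval x ≠ 0) (hρ : ∀ x, ρ.eval x ≠ 0) (heven : τ.comp (-X) = τ)
    (x : ℝ) : τ.eval x ≠ 0 := by
  -- The increasing function `exp (x²) τ s / (ρ a)` vanishes at `x` and at `-x`, so only `x = 0`
  -- remains; by evenness that zero of `τ` is multiple, hence shared with `s`.
  intro hx
  have hx_neg : τ.eval (-x) = 0 := by
    have heval := congrArg (eval x) heven
    rwa [hx, eval_comp, eval_neg, eval_X] at heval
  obtain rfl : x = 0 := by
    have hinj := (h.strictMono_exp_mul_eval_div_eval hc hτ hs ha hρ).injective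
    have hneg : -x = x := hinj (by simp [hx, hx_neg])
    linarith
  have hderiv : (derivative τ).eval 0 = 0 := by
    have heval := congrArg (fun p => (derivative p).eval 0) heven
    simp only [derivative_comp, derivative_neg, derivative_X, eval_mul, eval_neg, eval_one,
      eval_comp, eval_X, neg_zero] at heval
    linarith
  have hsx : s.eval 0 = 0 := by
    have hbilin := congrArg (eval 0) h.wronskian_eq
    simpa [wronskian, hx, hderiv, hc.ne, ha 0] using hbilin
  exact h.not_isRoot_of_isRoot hτ hs (ha 0) (hρ 0) hx hsx

theorem eval_derivative_ne_zero (h : IsDarbouxSquare c τ a s ρ) (hτ : ∀ x, τ.eval x ≠ 0)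
    (hρ : ∀ x, ρ.eval x = 0 → (derivative ρ).eval x ≠ 0) {x : ℝ} (hx : s.eval x = 0) :
    (derivative s).eval x ≠ 0 := by
  intro hderiv
  have hjac := congrArg (eval x) h.mul_eq_wronskian
  have hbilin := congrArg (eval x) h.wronskian_eq
  have hρx : ρ.eval x = 0 := by simpa [wronskian, hx, hderiv, hτ x] using hjac
  exact hρ x hρx (by simpa [wronskian, hx, hρx, hτ x] using hbilin)

theorem card_roots_eq (h : IsDarbouxSquare c τ a s ρ) (hc : c ≠ 0) (hτ : ∀ x, τ.eval x ≠ 0)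
    (ha : ∀ x, a.eval x ≠ 0) (hs : s ≠ 0) (hρ : ρ ≠ 0) :
    s.roots.toFinset.card = ρ.roots.toFinset.card + 1 := by
  have hτ0 : τ ≠ 0 := fun h => hτ 0 (by simp [h])
  apply le_antisymm
  · have hle := card_roots_le_card_roots_wronskian_add_one (p := s) ha
      (by rw [← h.mul_eq_wronskian]; exact mul_ne_zero hτ0 hρ)
    rwa [← h.mul_eq_wronskian, roots_mul_of_forall_eval_ne_zero hτ] at hle
  · have hca (x : ℝ) : (C c * a).eval x ≠ 0 := by simpa [hc] using ha x
    have hwronskian : wronskian τ ρ - 2 * X * (τ * ρ) = C c * a * s := by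
      rw [h.wronskian_eq, add_sub_cancel_left, mul_assoc]
    have hlt := card_roots_lt_card_roots_wronskian_sub (p := ρ) hτ
      (by rw [hwronskian]; exact mul_ne_zero (fun h => hca 0 (by simp [h])) hs)
    rwa [hwronskian, roots_mul_of_forall_eval_ne_zero hca] at hlt

end IsDarbouxSquare

end DarbouxSquare

section KreinAdler

open Finset

/-- The Krein–Adler condition: the values of `κ` are distinct and an even number of them exceed
each natural number that is not a value. -/
def IsKreinAdler {j : ℕ} (κ : Fin j → ℕ) : Prop :=
  Function.Injective κ ∧ ∀ a ∉ Set.range κ, Even #{i | a < κ i}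

/-- The least natural number that is not a value of `κ`. -/
noncomputable def leastGap {j : ℕ} (κ : Fin j → ℕ) : ℕ :=
  sInf (Set.range κ)ᶜ

variable {j : ℕ} {κ : Fin j → ℕ}

theorem leastGap_notMem_range (κ : Fin j → ℕ) : leastGap κ ∉ Set.range κ :=
  Nat.sInf_mem (Set.finite_range κ).infinite_compl.nonempty

theorem leastGap_le_of_notMem_range {a : ℕ} (ha : a ∉ Set.range κ) : leastGap κ ≤ a :=
  Nat.sInf_le ha

theorem range_leastGap_subset_image (κ : Fin j → ℕ) :
    Finset.range (leastGap κ) ⊆ univ.image κ := fun a ha => by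
  have hmem : a ∈ Set.range κ := not_not.mp (Nat.notMem_of_lt_sInf (Finset.mem_range.mp ha))
  simpa using hmem

theorem leastGap_le (κ : Fin j → ℕ) : leastGap κ ≤ j := by
  simpa using (card_le_card (range_leastGap_subset_image κ)).trans card_image_le

theorem card_filter_lt_leastGap (hκ : Function.Injective κ) :
    #{i | κ i < leastGap κ} = leastGap κ := by
  have himage : ({i | κ i < leastGap κ} : Finset (Fin j)).image κ = Finset.range (leastGap κ) := by
    ext a
    have hmem := @range_leastGap_subset_image _ κ a
    simp only [Finset.mem_range, Finset.mem_image, Finset.mem_filter_univ, mem_univ, true_and]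
      at hmem ⊢
    constructor
    · rintro ⟨i, hi, rfl⟩
      exact hi
    · intro ha
      obtain ⟨i, rfl⟩ := hmem ha
      exact ⟨i, ha, rfl⟩
  rw [← card_image_of_injective _ hκ, himage, card_range]

theorem injective_snoc_leastGap (hκ : Function.Injective κ) :
    Function.Injective (κ ▹ leastGap κ) :=
  Fin.snoc_injective_iff.mpr ⟨hκ, leastGap_notMem_range κ⟩

theorem leastGap_lt_leastGap_snoc (κ : Fin j → ℕ) :
    leastGap κ < leastGap (κ ▹ leastGap κ) := by
  have hgap := leastGap_notMem_range (κ ▹ leastGap κ)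
  rw [Fin.range_snoc, Set.mem_insert_iff, not_or] at hgap
  exact (leastGap_le_of_notMem_range hgap.2).lt_of_ne' hgap.1

theorem exists_forall_lt (κ : Fin j → ℕ) : ∃ m, ∀ i, κ i < m :=
  ⟨univ.sup κ + 1, fun i => Nat.lt_succ_of_le (le_sup (mem_univ i))⟩

theorem forall_snoc_lt_iff {g m : ℕ} : (∀ i, (κ ▹ g) i < m) ↔ g < m ∧ ∀ i, κ i < m := by
  simp [Fin.forall_fin_succ', and_comm]

namespace IsKreinAdler

theorem even_add_leastGap (h : IsKreinAdler κ) : Even (j + leastGap κ) := by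
  have hgap := leastGap_notMem_range κ
  have hsplit : #{i | κ i < leastGap κ} + #{i | leastGap κ < κ i} = j := by
    have hgt : ∀ i ∈ univ, (leastGap κ < κ i ↔ ¬κ i < leastGap κ) := fun i _ => by
      have hne : κ i ≠ leastGap κ := fun hi => hgap ⟨i, hi⟩
      omega
    rw [filter_congr hgt, card_filter_add_card_filter_not, Finset.card_fin]
  rw [card_filter_lt_leastGap h.1] at hsplit
  obtain ⟨e, he⟩ := h.2 _ hgap
  exact ⟨leastGap κ + e, by omega⟩

theorem snoc_leastGap (h : IsKreinAdler κ) : IsKreinAdler (κ ▹ leastGap κ) := by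
  refine ⟨injective_snoc_leastGap h.1, fun a ha => ?_⟩
  rw [Fin.range_snoc, Set.mem_insert_iff, not_or] at ha
  have hle := leastGap_le_of_notMem_range ha.2
  have hcard : #{i | a < (κ ▹ leastGap κ) i} = #{i | a < κ i} := by
    simp only [card_filter, Fin.sum_univ_castSucc, Fin.snoc_castSucc, Fin.snoc_last,
      if_neg hle.not_gt, add_zero]
  rw [hcard]
  exact h.2 a ha.2

theorem gap_filling_induction {m : ℕ} {motive : ∀ {j}, (Fin j → ℕ) → Prop}
    (full : ∀ κ : Fin m → ℕ, Function.Injective κ → (∀ i, κ i < m) → motive κ)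
    (fill : ∀ {j} (κ : Fin j → ℕ), IsKreinAdler κ → (∀ i, κ i < m) → leastGap κ < m →
      motive (κ ▹ leastGap κ) → motive κ)
    (h : IsKreinAdler κ) (hm : ∀ i, κ i < m) : motive κ := by
  have hj : j ≤ m := by
    simpa using Fintype.card_le_of_injective (fun i => (⟨κ i, hm i⟩ : Fin m))
      fun _ _ hij => h.1 (Fin.mk.inj hij)
  induction hj using Nat.decreasingInduction with
  | self => exact full κ h.1 hm
  | of_succ j hj ih =>
    have hgap : leastGap κ < m := (leastGap_le κ).trans_lt hj
    exact fill κ h hm hgap (ih h.snoc_leastGap (forall_snoc_lt_iff.mpr ⟨hgap, hm⟩))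

end IsKreinAdler

theorem sum_eq_sum_of_forall_lt {κ : Fin j → ℕ} (hκ : Function.Injective κ)
    (hlt : ∀ i, κ i < j) : ∑ i, κ i = ∑ i : Fin j, (i : ℕ) := by
  let f (i : Fin j) : Fin j := ⟨κ i, hlt i⟩
  have hf : Function.Bijective f :=
    Function.Injective.bijective_of_finite fun _ _ hi => hκ (Fin.mk.inj hi)
  exact hf.sum_comp (fun i => (i : ℕ))

theorem IsKreinAdler.even_sum (h : IsKreinAdler κ) : Even (∑ i : Fin j, ((i : ℕ) + κ i)) := by
  obtain ⟨m, hm⟩ := exists_forall_lt κ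
  refine gap_filling_induction (motive := fun {j} κ => Even (∑ i : Fin j, ((i : ℕ) + κ i)))
    (fun κ hκ hlt => ?_) (fun κ h _ _ ih => ?_) h hm
  · exact ⟨_, by rw [sum_add_distrib, sum_eq_sum_of_forall_lt hκ hlt]⟩
  · rw [Fin.sum_univ_castSucc] at ih
    simp only [Fin.snoc_castSucc, Fin.snoc_last, Fin.val_castSucc, Fin.val_last] at ih
    exact (Nat.even_add.mp ih).mpr h.even_add_leastGap

end KreinAdler

section ZeroCount

variable {j m : ℕ} {κ : Fin j → ℕ}

theorem hermiteWron_snoc_ne_zero (hκ : Function.Injective κ) {b : ℕ} (hb : b ∉ Set.range κ) :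
    hermiteWron (κ ▹ b) ≠ 0 :=
  (hermiteWron_ne_zero_and_natDegree (Fin.snoc_injective_iff.mpr ⟨hκ, hb⟩)).1

theorem eval_hermiteWron_ne_zero_of_forall_lt {κ : Fin m → ℕ} (hκ : Function.Injective κ)
    (hlt : ∀ i, κ i < m) (x : ℝ) : (hermiteWron κ).eval x ≠ 0 := by
  obtain ⟨hne, hdeg⟩ := hermiteWron_ne_zero_and_natDegree hκ
  rw [sum_eq_sum_of_forall_lt hκ hlt, Nat.add_eq_right] at hdeg
  rw [eq_C_of_natDegree_eq_zero hdeg] at hne ⊢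
  simpa using hne

theorem eval_hermiteWron_snoc_ne_zero_of_forall_lt {κ : Fin m → ℕ} (hκ : Function.Injective κ)
    (hlt : ∀ i, κ i < m) {g : ℕ} (hg : g ∉ Set.range κ) (hgm : g ≤ m) (x : ℝ) :
    (hermiteWron (κ ▹ g)).eval x ≠ 0 :=
  eval_hermiteWron_ne_zero_of_forall_lt (Fin.snoc_injective_iff.mpr ⟨hκ, hg⟩)
    (forall_snoc_lt_iff.mpr ⟨Nat.lt_succ_of_le hgm, fun i => (hlt i).trans m.lt_succ_self⟩) x

theorem notMem_range_of_forall_lt (hlt : ∀ i, κ i < m) : m ∉ Set.range κ := by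
  rintro ⟨i, hi⟩
  exact (hlt i).ne hi

namespace IsKreinAdler

theorem comp_neg_X_hermiteWron (h : IsKreinAdler κ) :
    (hermiteWron κ).comp (-X) = hermiteWron κ := by
  rw [hermiteWron_comp_neg_X, h.even_sum.neg_one_pow, one_mul]

theorem eval_hermiteWron_ne_zero_of_snoc (h : IsKreinAdler κ) {g b : ℕ} (hgb : g < b)
    (hb : b ∉ Set.range κ) (hg : ∀ x, (hermiteWron (κ ▹ g)).eval x ≠ 0)
    (hgb' : ∀ x, (hermiteWron (κ ▹ g ▹ b)).eval x ≠ 0) (x : ℝ) : (hermiteWron κ).eval x ≠ 0 := by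
  have hc : 2 * ((g : ℝ) - b) < 0 := by
    have hgb_real : (g : ℝ) < b := Nat.cast_lt.mpr hgb
    linarith
  exact (isDarbouxSquare_hermiteWron h.1 g b).eval_ne_zero_of_comp_neg_X_eq hc
    (hermiteWron_ne_zero_and_natDegree h.1).1 (hermiteWron_snoc_ne_zero h.1 hb) hg hgb'
    h.comp_neg_X_hermiteWron x

theorem eval_hermiteWron_ne_zero (h : IsKreinAdler κ) (x : ℝ) : (hermiteWron κ).eval x ≠ 0 := by
  obtain ⟨m, hm⟩ := exists_forall_lt κ
  refine (gap_filling_induction (motive := fun κ => ∀ x, (hermiteWron κ).eval x ≠ 0 ∧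
    (hermiteWron (κ ▹ leastGap κ)).eval x ≠ 0) (fun κ hκ hlt x => ?_)
    (fun κ h _ _ ih x => ?_) h hm x).1
  · exact ⟨eval_hermiteWron_ne_zero_of_forall_lt hκ hlt x,
      eval_hermiteWron_snoc_ne_zero_of_forall_lt hκ hlt (leastGap_notMem_range κ)
        (leastGap_le κ) x⟩
  · have hgap : leastGap (κ ▹ leastGap κ) ∉ Set.range κ := fun hmem =>
      leastGap_notMem_range (κ ▹ leastGap κ) (by rw [Fin.range_snoc]; exact .inr hmem)
    exact ⟨h.eval_hermiteWron_ne_zero_of_snoc (leastGap_lt_leastGap_snoc κ) hgap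
      (fun y => (ih y).1) (fun y => (ih y).2) x, (ih x).1⟩

theorem card_roots_hermiteWron_snoc (h : IsKreinAdler κ) (hm : ∀ i, κ i < m) :
    (hermiteWron (κ ▹ m)).roots.toFinset.card + j = m ∧
      ∀ x, (hermiteWron (κ ▹ m)).eval x = 0 → (derivative (hermiteWron (κ ▹ m))).eval x ≠ 0 := by
  refine gap_filling_induction (motive := fun {j} κ =>
    (hermiteWron (κ ▹ m)).roots.toFinset.card + j = m ∧ ∀ x, (hermiteWron (κ ▹ m)).eval x = 0 →
      (derivative (hermiteWron (κ ▹ m))).eval x ≠ 0) (fun κ hκ hlt => ?_)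
    (fun κ h hlt hgap ih => ?_) h hm
  · have hne := eval_hermiteWron_snoc_ne_zero_of_forall_lt hκ hlt (notMem_range_of_forall_lt hlt)
      le_rfl
    have hroots := roots_mul_of_forall_eval_ne_zero hne 1
    rw [mul_one, roots_one] at hroots
    simp [hroots, hne]
  · have hsquare := isDarbouxSquare_hermiteWron h.1 (leastGap κ) m
    have hτ := h.eval_hermiteWron_ne_zero
    have ha := h.snoc_leastGap.eval_hermiteWron_ne_zero
    have hc : 2 * ((leastGap κ : ℝ) - m) ≠ 0 :=
      mul_ne_zero two_ne_zero (sub_ne_zero.mpr (Nat.cast_injective.ne hgap.ne))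
    have hcard := hsquare.card_roots_eq hc hτ ha
      (hermiteWron_snoc_ne_zero h.1 (notMem_range_of_forall_lt hlt))
      (hermiteWron_snoc_ne_zero (injective_snoc_leastGap h.1)
        (notMem_range_of_forall_lt (forall_snoc_lt_iff.mpr ⟨hgap, hlt⟩)))
    exact ⟨by omega, fun x => hsquare.eval_derivative_ne_zero hτ ih.2⟩

end IsKreinAdler

end ZeroCount

section NonrealRoots

theorem filter_im_eq_zero_roots_map (p : ℝ[X]) :
    ((p.map (algebraMap ℝ ℂ)).roots.filter fun w => w.im = 0) =
      p.roots.map (algebraMap ℝ ℂ) := by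
  classical
  have hinj : Function.Injective (algebraMap ℝ ℂ) := (algebraMap ℝ ℂ).injective
  ext w
  by_cases hw : w.im = 0
  · obtain ⟨t, rfl⟩ : ∃ t : ℝ, algebraMap ℝ ℂ t = w := ⟨w.re, Complex.ext rfl hw.symm⟩
    rw [Multiset.count_filter_of_pos (p := fun w : ℂ => w.im = 0) hw,
      Multiset.count_map_eq_count' _ _ hinj, count_roots, count_roots,
      eq_rootMultiplicity_map hinj]
  · rw [Multiset.count_filter_of_neg (p := fun w : ℂ => w.im = 0) hw,
      Multiset.count_eq_zero_of_notMem]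
    intro hmem
    obtain ⟨t, -, rfl⟩ := Multiset.mem_map.mp hmem
    exact hw (Complex.ofReal_im t)

theorem card_filter_im_ne_zero_roots_add_card_roots (p : ℝ[X])
    [DecidablePred fun w : ℂ => w.im ≠ 0] :
    ((p.map (algebraMap ℝ ℂ)).roots.filter fun w => w.im ≠ 0).card + p.roots.card =
      p.natDegree := by
  have hreal : ((p.map (algebraMap ℝ ℂ)).roots.filter fun w => ¬w.im ≠ 0).card =
      p.roots.card := by
    simp only [not_not, filter_im_eq_zero_roots_map, Multiset.card_map]
  rw [← hreal, ← Multiset.card_add, Multiset.filter_add_not,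
    IsAlgClosed.card_roots_eq_natDegree, natDegree_map]

theorem nodup_roots_of_forall_eval_derivative_ne_zero {R : Type*} [CommRing R] [IsDomain R]
    {p : R[X]} (hp : ∀ x, p.eval x = 0 → (derivative p).eval x ≠ 0) : p.roots.Nodup := by
  classical
  rcases eq_or_ne p 0 with rfl | hp0
  · simp
  refine Multiset.nodup_iff_count_le_one.mpr fun x => not_lt.mp fun hx => ?_
  rw [count_roots, one_lt_rootMultiplicity_iff_isRoot hp0] at hx
  exact hp x hx.1 hx.2

end NonrealRoots

section Partitions

variable {r : ℕ} {lam : Fin r → ℕ} {n : ℕ}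

/-- The degrees `λ_r < λ_{r-1} + 1 < ⋯ < λ_1 + r - 1` of the Hermite polynomials whose Wronskian
is `genHermite r lam`. -/
def partitionDegrees (lam : Fin r → ℕ) (i : Fin r) : ℕ :=
  lam (Fin.rev i) + i

theorem sum_partitionDegrees (lam : Fin r → ℕ) :
    ∑ i, partitionDegrees lam i = ∑ i, lam i + ∑ i : Fin r, (i : ℕ) := by
  simp only [partitionDegrees, Finset.sum_add_distrib]
  rw [← Equiv.sum_comp Fin.revPerm lam]
  rfl

theorem XHermite_eq_hermiteWron (lam : Fin r → ℕ) (n : ℕ) :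
    XHermite r lam n = hermiteWron (partitionDegrees lam ▹ (n + r - ∑ i, lam i)) := by
  rw [XHermite, hermiteWron]
  congr 1
  ext1 j
  refine Fin.lastCases ?_ (fun i => ?_) j <;> simp [partitionDegrees]

theorem IsPartition.strictMono_partitionDegrees (h : IsPartition r lam) :
    StrictMono (partitionDegrees lam) := fun i j hij => by
  have hle := h.1 _ _ (Fin.rev_le_rev.mpr hij.le)
  exact add_lt_add_of_le_of_lt hle hij

theorem XDegSeq.notMem_range_partitionDegrees (h : XDegSeq r lam n) :
    n + r - ∑ i, lam i ∉ Set.range (partitionDegrees lam) := by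
  rintro ⟨i, hi⟩
  have hne := h.2 (Fin.rev i)
  have hle := h.1
  rw [partitionDegrees] at hi
  rw [Fin.val_rev] at hne
  omega

theorem IsPartition.XHermite_ne_zero_and_natDegree (h : IsPartition r lam) (hn : XDegSeq r lam n) :
    XHermite r lam n ≠ 0 ∧ (XHermite r lam n).natDegree = n := by
  have hinj := Fin.snoc_injective_iff.mpr
    ⟨h.strictMono_partitionDegrees.injective, hn.notMem_range_partitionDegrees⟩
  obtain ⟨hne, hdeg⟩ := hermiteWron_ne_zero_and_natDegree hinj
  rw [← XHermite_eq_hermiteWron] at hne hdeg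
  refine ⟨hne, ?_⟩
  simp only [Fin.sum_univ_castSucc, Fin.snoc_castSucc, Fin.snoc_last, Fin.val_castSucc,
    Fin.val_last, sum_partitionDegrees] at hdeg
  have hle := hn.1
  omega

theorem isKreinAdler_of_pairs {R : ℕ} {κ : Fin (R * 2) → ℕ} (hκ : Function.Injective κ)
    (hpair : ∀ t : Fin R, κ (finProdFinEquiv (t, 1)) = κ (finProdFinEquiv (t, 0)) + 1) :
    IsKreinAdler κ := by
  refine ⟨hκ, fun a ha => ?_⟩
  rw [Finset.card_filter, ← finProdFinEquiv.sum_comp, Fintype.sum_prod_type]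
  refine Finset.even_sum _ fun t _ => ?_
  have hlt : a < κ (finProdFinEquiv (t, 1)) ↔ a < κ (finProdFinEquiv (t, 0)) := by
    have hne : κ (finProdFinEquiv (t, 0)) ≠ a := fun h => ha ⟨_, h⟩
    rw [hpair t]
    omega
  simp only [Fin.sum_univ_two, hlt]
  exact ⟨_, rfl⟩

theorem IsEvenPartition.isKreinAdler (h : IsEvenPartition r lam) :
    IsKreinAdler (partitionDegrees lam) := by
  obtain ⟨hpart, hr, hpair⟩ := h
  obtain ⟨R, rfl⟩ := dvd_iff_exists_eq_mul_left.mp hr.two_dvd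
  refine isKreinAdler_of_pairs hpart.strictMono_partitionDegrees.injective fun t => ?_
  have ht := t.isLt
  have hrev_one : Fin.rev (finProdFinEquiv (t, (1 : Fin 2))) = ⟨2 * (R - 1 - t), by omega⟩ := by
    ext
    simp only [Fin.val_rev, finProdFinEquiv_apply_val, Fin.val_one]
    omega
  have hrev_zero : Fin.rev (finProdFinEquiv (t, (0 : Fin 2))) =
      ⟨2 * (R - 1 - t) + 1, by omega⟩ := by
    ext
    simp only [Fin.val_rev, finProdFinEquiv_apply_val, Fin.val_zero]
    omega
  rw [partitionDegrees, partitionDegrees, hrev_one, hrev_zero, hpair (R - 1 - t) (by omega)]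
  simp only [finProdFinEquiv_apply_val, Fin.val_one, Fin.val_zero]
  omega

end Partitions

open scoped Classical in
/-- For an even partition `λ` and `n ∈ N_λ` with `n ≥ |λ| + λ_1`, the polynomial
`P_n` has exactly `n - |λ|` real zeros, all simple, and exactly `|λ|` non-real
zeros counted with multiplicity. -/
theorem XHermite_zero_count
    (r : ℕ) (lam : Fin r → ℕ) (hpart : IsEvenPartition r lam)
    (n : ℕ) (hn : XDegSeq r lam n)
    (hbig : ∀ i : Fin r, (∑ i, lam i) + lam i ≤ n) :
    Set.ncard {t : ℝ | (XHermite r lam n).eval t = 0} = n - (∑ i, lam i) ∧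
    (∀ t : ℝ, (XHermite r lam n).eval t = 0 →
      (derivative (XHermite r lam n)).eval t ≠ 0) ∧
    Multiset.card
      ((((XHermite r lam n).map (algebraMap ℝ ℂ)).roots).filter
        fun w : ℂ => w.im ≠ 0) = ∑ i, lam i := by
  obtain ⟨hne, hdeg⟩ := hpart.1.XHermite_ne_zero_and_natDegree hn
  have hlt (i : Fin r) : partitionDegrees lam i < n + r - ∑ i, lam i := by
    have := hbig (Fin.rev i)
    rw [partitionDegrees]
    omega
  obtain ⟨hcard, hsimple⟩ := hpart.isKreinAdler.card_roots_hermiteWron_snoc hlt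
  rw [← XHermite_eq_hermiteWron] at hcard hsimple
  have hle := hn.1
  have hreal : {t : ℝ | (XHermite r lam n).eval t = 0} = (XHermite r lam n).roots.toFinset := by
    ext t
    simp [hne]
  have hsplit := card_filter_im_ne_zero_roots_add_card_roots (XHermite r lam n)
  rw [hdeg, ← Multiset.toFinset_card_of_nodup
    (nodup_roots_of_forall_eval_derivative_ne_zero hsimple)] at hsplit
  refine ⟨?_, hsimple, by omega⟩
  rw [hreal, Set.ncard_coe_finset]
  omega
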